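/- Consistency of the nonlocal ∞-Laplacian at points of nonvanishing gradient: let φ ∈ C³(ℝ^d), f ∈ C²(𝕋^d) positive, α ∈ ℝ, Φ a C² kernel with Φ(s) ≥ 1 on (0,1) and Φ(s) = 0 for s ≥ 2, and define H_h φ(x) = max_{y∈𝕋^d} f(x)^α f(y)^α Φ(|x−y|/h)(φ(y)−φ(x)) + min_{y∈𝕋^d} f(x)^α f(y)^α Φ(|x−y|/h)(φ(y)−φ(x)). If x₀ satisfies ∇φ(x₀) ≠ 0 and Δ_∞φ(x₀) + 2α ∇log f(x₀)·∇φ(x₀) < 0, then for any sequence x_h → x₀ as h → 0⁺, limsup_{h→0⁺} h^{−2} H_h φ(x_h) < 0. -/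

import Mathlib

open scoped RealInnerProductSpace
open Filter

/-- The nonlocal (continuum) ∞-Laplacian with self-tuning weights:
`H_h φ(x) = max_y f(x)^α f(y)^α Φ(|x−y|/h)(φ(y)−φ(x)) + min_y (same)`. -/
noncomputable def nonlocalInfLap {d : ℕ} (f : EuclideanSpace ℝ (Fin d) → ℝ) (α : ℝ)
    (Φ : ℝ → ℝ) (φ : EuclideanSpace ℝ (Fin d) → ℝ) (h : ℝ)
    (x : EuclideanSpace ℝ (Fin d)) : ℝ :=
  sSup (Set.range fun y : EuclideanSpace ℝ (Fin d) =>
    Real.rpow (f x) α * Real.rpow (f y) α * Φ (dist x y / h) * (φ y - φ x)) +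
  sInf (Set.range fun y : EuclideanSpace ℝ (Fin d) =>
    Real.rpow (f x) α * Real.rpow (f y) α * Φ (dist x y / h) * (φ y - φ x))

/-!
Put `y = x + h w` and `T_h(w) = Φ(|w|) G(x) G(x + h w) (φ(x + h w) − φ(x))` with `G = f ^ α`, so
that `H_h φ(x) = sup T_h + inf T_h`. As `h → 0⁺`, uniformly in `w`, `T_h(w) / h` tends to
`A(w) = Φ(|w|) ⟨p, w⟩`, where `p = G(x₀)² ∇φ(x₀)`, and `(T_h(w) + T_h(-w)) / h²` tends to
`B(w) = Φ(|w|) Q(w)`, where `Q` is a quadratic form. The differential inequality at `x₀` says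
`Q(p) < 0`, hence `Q < 0` on a cone about `p`, and the near-maximizers of `A` lie in this cone. So
a near-maximizer `w` of `T_h` has `B(w) ≤ -a` for a fixed `a > 0`, and `-w` as a competitor for
the infimum gives `sup T_h + inf T_h ≤ -(a / 2) h²`. Neither extremum need be attained.
-/

open Asymptotics Topology

lemma tendsto_fst_add_snd {E : Type*} [AddMonoid E] [TopologicalSpace E] [ContinuousAdd E]
    (x₀ : E) :
    Tendsto (fun q : E × E => q.1 + q.2) (𝓝 (x₀, 0)) (𝓝 x₀) :=
  continuous_add.tendsto' (x₀, 0) x₀ (add_zero x₀)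

lemma tendsto_fst_sub_snd {E : Type*} [AddGroup E] [TopologicalSpace E] [ContinuousSub E]
    (x₀ : E) :
    Tendsto (fun q : E × E => q.1 - q.2) (𝓝 (x₀, 0)) (𝓝 x₀) :=
  continuous_sub.tendsto' (x₀, 0) x₀ (sub_zero x₀)

section Expansion

variable {E F : Type*} [NormedAddCommGroup E] [NormedSpace ℝ E]
  [NormedAddCommGroup F] [NormedSpace ℝ F]

lemma isLittleO_forward_diff {φ : E → F} {φ' : E →L[ℝ] F} {x₀ : E}
    (hφ : HasStrictFDerivAt φ φ' x₀) :
    (fun q : E × E => φ (q.1 + q.2) - φ q.1 - φ' q.2) =o[𝓝 (x₀, 0)] fun q => q.2 := by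
  have hpair : Tendsto (fun q : E × E => (q.1 + q.2, q.1)) (𝓝 (x₀, 0)) (𝓝 (x₀, x₀)) :=
    (tendsto_fst_add_snd x₀).prodMk_nhds continuous_fst.continuousAt
  simpa [Function.comp_def] using hφ.isLittleO.comp_tendsto hpair

lemma isLittleO_central_diff {φ : E → F} {φ' : E →L[ℝ] F} {x₀ : E}
    (hφ : HasStrictFDerivAt φ φ' x₀) :
    (fun q : E × E => φ (q.1 + q.2) - φ (q.1 - q.2) - (2 : ℝ) • φ' q.2)
      =o[𝓝 (x₀, 0)] fun q => q.2 := by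
  have hpair : Tendsto (fun q : E × E => (q.1 + q.2, q.1 - q.2)) (𝓝 (x₀, 0)) (𝓝 (x₀, x₀)) :=
    (tendsto_fst_add_snd x₀).prodMk_nhds (tendsto_fst_sub_snd x₀)
  have hsub (q : E × E) : q.1 + q.2 - (q.1 - q.2) = (2 : ℝ) • q.2 := by module
  have h := hφ.isLittleO.comp_tendsto hpair
  simp only [Function.comp_def, hsub, map_smul] at h
  exact h.trans_isBigO ((isBigO_refl _ _).const_smul_left 2)

lemma isLittleO_pow_succ_of_hasFDerivAt_snd {X : Type*} [PseudoMetricSpace X] {R : X × E → F}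
    {R' : X × E → E →L[ℝ] F} {x₀ : X} {k : ℕ}
    (hR : ∀ᶠ q in 𝓝 (x₀, 0), HasFDerivAt (fun v => R (q.1, v)) (R' q) q.2)
    (hR' : R' =o[𝓝 (x₀, 0)] fun q => ‖q.2‖ ^ k) (hR0 : ∀ x, R (x, 0) = 0) :
    R =o[𝓝 (x₀, 0)] fun q => ‖q.2‖ ^ (k + 1) := by
  refine isLittleO_iff.2 fun c hc => ?_
  obtain ⟨δ, hδ, hball⟩ := Metric.eventually_nhds_iff.1 (hR.and (isLittleO_iff.1 hR' hc))
  refine Metric.eventually_nhds_iff.2 ⟨δ, hδ, fun ⟨x, v⟩ hxv => ?_⟩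
  have hsegment (w : E) (hw : w ∈ Metric.closedBall 0 ‖v‖) : dist (x, w) (x₀, 0) < δ := by
    rw [Prod.dist_eq, max_lt_iff] at hxv ⊢
    exact ⟨hxv.1, (Metric.mem_closedBall.1 hw).trans_lt (by simpa using hxv.2)⟩
  have hmean := (convex_closedBall (0 : E) ‖v‖).norm_image_sub_le_of_norm_hasFDerivWithin_le
    (f := fun w => R (x, w)) (C := c * ‖v‖ ^ k) (x := 0) (y := v)
    (fun w hw => (hball (hsegment w hw)).1.hasFDerivWithinAt)
    (fun w hw => (hball (hsegment w hw)).2.trans ?_) (by simp) (by simp)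
  · simpa [hR0, pow_succ, mul_assoc] using hmean
  · have hwv : ‖w‖ ≤ ‖v‖ := by simpa using hw
    simpa using by gcongr

lemma isLittleO_second_diff {φ : E → F} {x₀ : E} (hφ : ContDiffAt ℝ 2 φ x₀) :
    (fun q : E × E => φ (q.1 + q.2) + φ (q.1 - q.2) - (2 : ℝ) • φ q.1
      - fderiv ℝ (fderiv ℝ φ) x₀ q.2 q.2) =o[𝓝 (x₀, 0)] fun q => ‖q.2‖ ^ 2 := by
  set D := fderiv ℝ (fderiv ℝ φ) x₀
  have hD : HasStrictFDerivAt (fderiv ℝ φ) D x₀ :=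
    (hφ.fderiv_right (m := 1) (by norm_num)).hasStrictFDerivAt (by norm_num)
  have hsymm (v w : E) : D v w = D w v := (hφ.isSymmSndFDerivAt (by simp)).eq v w
  have hdiff : ∀ᶠ y in 𝓝 x₀, DifferentiableAt ℝ φ y :=
    (hφ.eventually (by simp)).mono fun y hy => hy.differentiableAt (by norm_num)
  refine isLittleO_pow_succ_of_hasFDerivAt_snd (k := 1)
    (R' := fun q => fderiv ℝ φ (q.1 + q.2) - fderiv ℝ φ (q.1 - q.2) - (2 : ℝ) • D q.2)
    ?_ (by simpa using (isLittleO_central_diff hD).norm_right) (fun x => by simp [two_smul])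
  filter_upwards [(tendsto_fst_add_snd x₀).eventually hdiff,
    (tendsto_fst_sub_snd x₀).eventually hdiff] with ⟨x, v⟩ hadd hsub
  have hφ_add := hadd.hasFDerivAt.comp v ((hasFDerivAt_id v).const_add x)
  have hφ_sub := hsub.hasFDerivAt.comp v ((hasFDerivAt_id v).const_sub x)
  have hquad := D.hasFDerivAt.clm_apply (hasFDerivAt_id v)
  refine (((hφ_add.add hφ_sub).sub_const ((2 : ℝ) • φ x)).sub hquad).congr_fderiv ?_
  ext z
  simp only [ContinuousLinearMap.comp_id, ContinuousLinearMap.comp_neg, id_eq, sub_apply, add_apply,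
    neg_apply, ContinuousLinearMap.flip_apply, hsymm z v, two_smul, sub_left_inj]
  abel

lemma isLittleO_mul_sub_mul {X : Type*} {l : Filter X} {f₁ f₂ p₁ p₂ u₁ u₂ : X → ℝ}
    (h₁ : (fun q => f₁ q - p₁ q) =o[l] u₁) (h₂ : (fun q => f₂ q - p₂ q) =o[l] u₂)
    (hp₁ : p₁ =O[l] u₁) (hp₂ : p₂ =O[l] u₂) :
    (fun q => f₁ q * f₂ q - p₁ q * p₂ q) =o[l] fun q => u₁ q * u₂ q := by
  have hf₂ : f₂ =O[l] u₂ := (h₂.isBigO.add hp₂).congr_left fun q => by ring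
  exact ((h₁.mul_isBigO hf₂).add (hp₁.mul_isLittleO h₂)).congr_left fun q => by ring

lemma isLittleO_mul_sub_const_mul {X : Type*} {l : Filter X} {a f p u : X → ℝ} {a₀ : ℝ}
    (ha : Tendsto a l (𝓝 a₀)) (hf : (fun q => f q - p q) =o[l] u) (hp : p =O[l] u) :
    (fun q => a q * f q - a₀ * p q) =o[l] u := by
  have ha' : (fun q => a q - a₀) =o[l] fun _ => (1 : ℝ) :=
    (isLittleO_one_iff ℝ).2 (tendsto_sub_nhds_zero_iff.2 ha)
  simpa using isLittleO_mul_sub_mul ha' hf (isBigO_const_const a₀ one_ne_zero l) hp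

/-- The increment `v ↦ G(x) G(x + v) (φ(x + v) − φ(x))`, as a function of the pair `(x, v)`, whose
products with the kernel `Φ(|v| / h)` are extremized by the nonlocal ∞-Laplacian. -/
def weightedIncrement (G φ : E → ℝ) (q : E × E) : ℝ :=
  G q.1 * G (q.1 + q.2) * (φ (q.1 + q.2) - φ q.1)

/-- The second derivative of `weightedIncrement G φ (x₀, ·)` at the origin, as a quadratic form. -/
noncomputable def incrementHessian (G φ : E → ℝ) (x₀ v : E) : ℝ :=
  G x₀ * (G x₀ * fderiv ℝ (fderiv ℝ φ) x₀ v v + 2 * (fderiv ℝ G x₀ v * fderiv ℝ φ x₀ v))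

lemma incrementHessian_smul (G φ : E → ℝ) (x₀ : E) (r : ℝ) (v : E) :
    incrementHessian G φ x₀ (r • v) = r ^ 2 * incrementHessian G φ x₀ v := by
  simp only [incrementHessian, map_smul, smul_apply, smul_eq_mul]
  ring

lemma continuous_incrementHessian (G φ : E → ℝ) (x₀ : E) :
    Continuous (incrementHessian G φ x₀) := by
  unfold incrementHessian
  fun_prop

lemma isBigO_clm_apply_self (D : E →L[ℝ] E →L[ℝ] F) (l : Filter E) :
    (fun v => D v v) =O[l] fun v => ‖v‖ ^ 2 :=
  .of_bound ‖D‖ (.of_forall fun v => by simpa [pow_two, mul_assoc] using D.le_opNorm₂ v v)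

lemma isBigO_incrementHessian (G φ : E → ℝ) (x₀ : E) (l : Filter E) :
    incrementHessian G φ x₀ =O[l] fun v => ‖v‖ ^ 2 := by
  have hlin (ψ : E → ℝ) : (fun v => fderiv ℝ ψ x₀ v) =O[l] fun v => ‖v‖ :=
    ((fderiv ℝ ψ x₀).isBigO_id l).norm_right
  have hprod := ((hlin G).mul (hlin φ)).const_mul_left 2
  simp only [← pow_two] at hprod
  exact (((isBigO_clm_apply_self _ l).const_mul_left _).add hprod).const_mul_left _

lemma isLittleO_weightedIncrement {G φ : E → ℝ} {x₀ : E} {φ' : E →L[ℝ] ℝ}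
    (hG : ContinuousAt G x₀) (hφ : HasStrictFDerivAt φ φ' x₀) :
    (fun q => weightedIncrement G φ q - G x₀ ^ 2 * φ' q.2) =o[𝓝 (x₀, 0)] fun q => ‖q.2‖ := by
  have hweight : Tendsto (fun q : E × E => G q.1 * G (q.1 + q.2)) (𝓝 (x₀, 0)) (𝓝 (G x₀ ^ 2)) := by
    rw [pow_two]
    exact (hG.tendsto.comp (continuous_fst.tendsto' (x₀, 0) x₀ rfl)).mul
      (hG.tendsto.comp (tendsto_fst_add_snd x₀))
  exact isLittleO_mul_sub_const_mul hweight (isLittleO_forward_diff hφ).norm_right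
    (φ'.isBigO_comp _ _).norm_right

-- With `a± = G(x ± v)` and `b± = φ(x ± v) − φ(x)`, use
-- `a₊b₊ + a₋b₋ = (a₊ + a₋)(b₊ + b₋) / 2 + (a₊ − a₋)(b₊ − b₋) / 2`.
lemma isLittleO_weightedIncrement_add_neg {G φ : E → ℝ} {x₀ : E}
    (hG : ContDiffAt ℝ 1 G x₀) (hφ : ContDiffAt ℝ 2 φ x₀) :
    (fun q => weightedIncrement G φ q + weightedIncrement G φ (q.1, -q.2)
      - incrementHessian G φ x₀ q.2) =o[𝓝 (x₀, 0)] fun q => ‖q.2‖ ^ 2 := by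
  have hbase : Tendsto (fun q : E × E => G q.1) (𝓝 (x₀, 0)) (𝓝 (G x₀)) :=
    hG.continuousAt.tendsto.comp (continuous_fst.tendsto' (x₀, 0) x₀ rfl)
  have hmean : Tendsto (fun q : E × E => (G (q.1 + q.2) + G (q.1 - q.2)) / 2)
      (𝓝 (x₀, 0)) (𝓝 (G x₀)) := by
    simpa using ((hG.continuousAt.tendsto.comp (tendsto_fst_add_snd x₀)).add
      (hG.continuousAt.tendsto.comp (tendsto_fst_sub_snd x₀))).div_const 2
  have hquad : (fun q : E × E => fderiv ℝ (fderiv ℝ φ) x₀ q.2 q.2) =O[𝓝 (x₀, 0)]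
      fun q => ‖q.2‖ ^ 2 := (isBigO_clm_apply_self _ ⊤).comp_tendsto le_top
  have hlin (ψ : E → ℝ) : (fun q : E × E => (2 : ℝ) • fderiv ℝ ψ x₀ q.2) =O[𝓝 (x₀, 0)]
      fun q => ‖q.2‖ :=
    (((fderiv ℝ ψ x₀).isBigO_comp (fun q : E × E => q.2) _).const_smul_left (2 : ℝ)).norm_right
  have heven := isLittleO_mul_sub_const_mul (hbase.mul hmean) (isLittleO_second_diff hφ) hquad
  have hodd := isLittleO_mul_sub_const_mul hbase (isLittleO_mul_sub_mul
    (isLittleO_central_diff (hG.hasStrictFDerivAt one_ne_zero)).norm_right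
    (isLittleO_central_diff (hφ.hasStrictFDerivAt two_ne_zero)).norm_right
    (hlin G) (hlin φ)) ((hlin G).mul (hlin φ))
  simp only [← pow_two] at hodd
  refine (heven.add (hodd.const_mul_left (1 / 2))).congr_left fun q => ?_
  simp only [weightedIncrement, incrementHessian, smul_eq_mul, ← sub_eq_add_neg]
  ring

end Expansion

section SupAddInf

variable {X : Type*} [Nonempty X]

lemma ciSup_add_ciInf_le_neg {T : X → ℝ} (σ : X → X) {κ : ℝ} (hκ : 0 < κ)
    (hbelow : BddBelow (Set.range T)) (habove : BddAbove (Set.range T))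
    (h : ∀ w, (∃ w', T w + κ ≤ T w') ∨ T w + T (σ w) ≤ -κ) :
    (⨆ w, T w) + ⨅ w, T w ≤ -κ := by
  by_contra! hlt
  obtain ⟨w, hw⟩ := exists_lt_of_lt_ciSup
    (max_lt (sub_lt_self (⨆ w, T w) hκ) (by linarith : -κ - ⨅ w, T w < ⨆ w, T w))
  obtain ⟨hgain, hpair⟩ := max_lt_iff.1 hw
  rcases h w with ⟨w', hw'⟩ | hw'
  · linarith [le_ciSup habove w']
  · linarith [ciInf_le hbelow (σ w)]

lemma neg_le_ciSup_add_ciInf {T : X → ℝ} (σ : X → X) {C : ℝ} (habove : BddAbove (Set.range T))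
    (h : ∀ w, -C ≤ T w + T (σ w)) : -C ≤ (⨆ w, T w) + ⨅ w, T w := by
  have hinf : -C - ⨆ w, T w ≤ ⨅ w, T w :=
    le_ciInf fun w => by linarith [h w, le_ciSup habove (σ w)]
  linarith

-- Where `A` misses its supremum by `a`, the point `w` is no near-maximizer of `T`, because the gap
-- `a * h` in `T` dominates `h ^ 2`; at every other `w`, `σ w` competes for the infimum.
lemma ciSup_add_ciInf_mem_Icc {T A B : X → ℝ} (σ : X → X) {a C h : ℝ} (hpos : 0 < h) (hlt : h < 1)
    (ha : 0 < a) (hT : ∀ w, |A w * h - T w| ≤ a / 4 * h)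
    (hTσ : ∀ w, |B w * h ^ 2 - (T w + T (σ w))| ≤ a / 2 * h ^ 2)
    (hAC : ∀ w, |A w| ≤ C) (hBC : ∀ w, |B w| ≤ C)
    (hAB : ∀ w, (∃ w', A w + a ≤ A w') ∨ B w ≤ -a) :
    (⨆ w, T w) + ⨅ w, T w ∈ Set.Icc (-((C + a) * h ^ 2)) (-(a / 2 * h ^ 2)) := by
  have hbdd (w : X) : |T w| ≤ (C + a / 4) * h := by
    have hAw : |A w * h| ≤ C * h := by
      rw [abs_mul, abs_of_pos hpos]
      exact mul_le_mul_of_nonneg_right (hAC w) hpos.le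
    linarith [abs_sub_abs_le_abs_sub (T w) (A w * h), abs_sub_comm (T w) (A w * h), hT w]
  have habove : BddAbove (Set.range T) :=
    ⟨_, Set.forall_mem_range.2 fun w => (abs_le.1 (hbdd w)).2⟩
  have hbelow : BddBelow (Set.range T) :=
    ⟨_, Set.forall_mem_range.2 fun w => (abs_le.1 (hbdd w)).1⟩
  refine ⟨neg_le_ciSup_add_ciInf σ habove fun w => ?_,
    ciSup_add_ciInf_le_neg σ (by positivity) hbelow habove fun w => ?_⟩
  · have hBC' : -C * h ^ 2 ≤ B w * h ^ 2 :=
      mul_le_mul_of_nonneg_right (abs_le.1 (hBC w)).1 (by positivity)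
    have hslack : 0 ≤ a * h ^ 2 := by positivity
    linarith [abs_le.1 (hTσ w)]
  · rcases hAB w with ⟨w', hgain⟩ | hneg
    · have hgap : (A w + a) * h ≤ A w' * h := mul_le_mul_of_nonneg_right hgain hpos.le
      have hsq : a / 2 * h ^ 2 ≤ a / 2 * h :=
        mul_le_mul_of_nonneg_left (pow_le_of_le_one hpos.le hlt.le two_ne_zero) (by positivity)
      exact .inl ⟨w', by linarith [abs_le.1 (hT w), abs_le.1 (hT w')]⟩
    · have hBneg : B w * h ^ 2 ≤ -a * h ^ 2 := mul_le_mul_of_nonneg_right hneg (by positivity)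
      exact .inr (by linarith [abs_le.1 (hTσ w)])

theorem limsup_ciSup_add_ciInf_div_sq_neg {ι : Type*} {l : Filter ι} [l.NeBot] {T : ι → X → ℝ}
    {h : ι → ℝ} {A B : X → ℝ} (σ : X → X) {a C : ℝ} (hh : Tendsto h l (𝓝[>] 0))
    (hA : TendstoUniformly (fun i w => T i w / h i) A l)
    (hB : TendstoUniformly (fun i w => (T i w + T i (σ w)) / h i ^ 2) B l)
    (hAC : ∀ w, |A w| ≤ C) (hBC : ∀ w, |B w| ≤ C) (ha : 0 < a)
    (hAB : ∀ w, (∃ w', A w + a ≤ A w') ∨ B w ≤ -a) :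
    limsup (fun i => ((⨆ w, T i w) + ⨅ w, T i w) / h i ^ 2) l < 0 := by
  have hbounds : ∀ᶠ i in l,
      ((⨆ w, T i w) + ⨅ w, T i w) / h i ^ 2 ∈ Set.Icc (-(C + a)) (-(a / 2)) := by
    filter_upwards [Metric.tendstoUniformly_iff.1 hA (a / 4) (by positivity),
      Metric.tendstoUniformly_iff.1 hB (a / 2) (by positivity),
      hh.eventually (Ioo_mem_nhdsGT one_pos)] with i hAi hBi ⟨hpos, hlt⟩
    have hclear {r b t ε : ℝ} (hr : 0 < r) (hd : dist b (t / r) < ε) : |b * r - t| ≤ ε * r := by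
      rw [Real.dist_eq, sub_div' hr.ne', abs_div, abs_of_pos hr, div_lt_iff₀ hr] at hd
      exact hd.le
    have hmem := ciSup_add_ciInf_mem_Icc σ hpos hlt ha (fun w => hclear hpos (hAi w))
      (fun w => hclear (pow_pos hpos 2) (hBi w)) hAC hBC hAB
    rwa [← neg_mul, ← neg_mul, Set.mem_Icc, ← le_div_iff₀ (by positivity),
      ← div_le_iff₀ (by positivity)] at hmem
  have hcobdd := (isBoundedUnder_of_eventually_ge
    (hbounds.mono fun _ => And.left)).isCoboundedUnder_le
  exact (limsup_le_of_le hcobdd (hbounds.mono fun _ => And.right)).trans_lt (by linarith)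

end SupAddInf

section Kernel

variable {Φ : ℝ → ℝ} {R : ℝ}

lemma exists_kernel_mul_pow_le (hΦ0 : ∀ s, 0 ≤ Φ s) (hΦb : BddAbove (Φ '' Set.Icc 0 R))
    (hΦR : ∀ s, R ≤ s → Φ s = 0) (k : ℕ) : ∃ C, 0 < C ∧ ∀ s, 0 ≤ s → Φ s * s ^ k ≤ C := by
  obtain ⟨M, hM⟩ := hΦb
  refine ⟨max (M * R ^ k) 1, by positivity, fun s hs => ?_⟩
  rcases le_total R s with hRs | hsR
  · simp [hΦR s hRs]
  · have hΦM : Φ s ≤ M := hM ⟨s, ⟨hs, hsR⟩, rfl⟩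
    exact le_max_of_le_left (mul_le_mul hΦM (by gcongr) (by positivity) ((hΦ0 s).trans hΦM))

lemma exists_abs_kernel_mul_le {E : Type*} [NormedAddCommGroup E] {P : E → ℝ} {k : ℕ}
    (hΦ0 : ∀ s, 0 ≤ Φ s) (hΦb : BddAbove (Φ '' Set.Icc 0 R)) (hΦR : ∀ s, R ≤ s → Φ s = 0)
    (hP : P =O[⊤] fun w => ‖w‖ ^ k) : ∃ C, ∀ w, |Φ ‖w‖ * P w| ≤ C := by
  obtain ⟨C, -, hC⟩ := exists_kernel_mul_pow_le hΦ0 hΦb hΦR k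
  obtain ⟨K, hK, hPK⟩ := hP.exists_nonneg
  refine ⟨K * C, fun w => ?_⟩
  have hPw : |P w| ≤ K * ‖w‖ ^ k := by simpa using eventually_top.1 hPK.bound w
  calc |Φ ‖w‖ * P w| = Φ ‖w‖ * |P w| := by rw [abs_mul, abs_of_nonneg (hΦ0 _)]
    _ ≤ Φ ‖w‖ * (K * ‖w‖ ^ k) := mul_le_mul_of_nonneg_left hPw (hΦ0 _)
    _ = K * (Φ ‖w‖ * ‖w‖ ^ k) := by ring
    _ ≤ K * C := mul_le_mul_of_nonneg_left (hC _ (norm_nonneg w)) hK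

theorem tendstoUniformly_kernel_mul_rescaled {X E ι : Type*} [PseudoMetricSpace X]
    [NormedAddCommGroup E] [NormedSpace ℝ E] {l : Filter ι} {F : X × E → ℝ} {P : E → ℝ} {k : ℕ}
    {x₀ : X} {x : ι → X} {h : ι → ℝ} (hΦ0 : ∀ s, 0 ≤ Φ s) (hΦb : BddAbove (Φ '' Set.Icc 0 R))
    (hΦR : ∀ s, R ≤ s → Φ s = 0) (hP : ∀ (r : ℝ) w, P (r • w) = r ^ k * P w)
    (hF : (fun q => F q - P q.2) =o[𝓝 (x₀, 0)] fun q => ‖q.2‖ ^ k)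
    (hx : Tendsto x l (𝓝 x₀)) (hh : Tendsto h l (𝓝[>] 0)) :
    TendstoUniformly (fun i w => Φ ‖w‖ * F (x i, h i • w) / h i ^ k) (fun w => Φ ‖w‖ * P w) l := by
  obtain ⟨C, hC, hΦC⟩ := exists_kernel_mul_pow_le hΦ0 hΦb hΦR k
  refine Metric.tendstoUniformly_iff.2 fun ε hε => ?_
  obtain ⟨δ, hδ, hball⟩ :=
    Metric.eventually_nhds_iff.1 (isLittleO_iff.1 hF (by positivity : 0 < ε / (2 * C)))
  have hscale : ∀ᶠ i in l, h i * R < δ := by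
    have hhR : Tendsto (fun i => h i * R) l (𝓝 0) := by
      simpa using (hh.mono_right nhdsWithin_le_nhds).mul_const R
    exact hhR.eventually (gt_mem_nhds hδ)
  filter_upwards [hscale, hx.eventually (Metric.ball_mem_nhds x₀ hδ),
    hh.eventually self_mem_nhdsWithin] with i hhR hxi (hpos : 0 < h i) w
  rcases le_or_gt R ‖w‖ with hRw | hwR
  · simpa [hΦR _ hRw] using hε
  have hnorm : ‖h i • w‖ = h i * ‖w‖ := by rw [norm_smul, Real.norm_of_nonneg hpos.le]
  have hnear : dist (x i, h i • w) (x₀, 0) < δ := by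
    rw [Prod.dist_eq, max_lt_iff, dist_zero_right, hnorm]
    exact ⟨hxi, (mul_lt_mul_of_pos_left hwR hpos).trans hhR⟩
  have hremainder : |F (x i, h i • w) - h i ^ k * P w| ≤ ε / (2 * C) * (h i * ‖w‖) ^ k := by
    simpa [hP, hnorm, abs_of_pos hpos] using hball hnear
  calc dist (Φ ‖w‖ * P w) (Φ ‖w‖ * F (x i, h i • w) / h i ^ k)
      = Φ ‖w‖ * |F (x i, h i • w) - h i ^ k * P w| / h i ^ k := by
        rw [dist_comm, Real.dist_eq, div_sub' (by positivity), abs_div, abs_of_pos (pow_pos hpos k),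
          ← abs_of_nonneg (hΦ0 ‖w‖), ← abs_mul, abs_of_nonneg (hΦ0 ‖w‖)]
        ring_nf
    _ ≤ Φ ‖w‖ * (ε / (2 * C) * (h i * ‖w‖) ^ k) / h i ^ k := by
        have hΦw := hΦ0 ‖w‖
        gcongr
    _ = ε / (2 * C) * (Φ ‖w‖ * ‖w‖ ^ k) := by
        rw [mul_pow]
        field_simp
    _ ≤ ε / (2 * C) * C := by gcongr; exact hΦC _ (norm_nonneg w)
    _ < ε := by field_simp; linarith

end Kernel

section Cone

variable {E : Type*} [NormedAddCommGroup E] [InnerProductSpace ℝ E]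

lemma ne_zero_of_homogeneous_neg {Q : E → ℝ} {p : E}
    (hQ : ∀ (r : ℝ) v, Q (r • v) = r ^ 2 * Q v) (hp : Q p < 0) : p ≠ 0 := by
  rintro rfl
  exact hp.ne (by simpa using hQ 0 0)

lemma exists_cone_le_neg_mul_norm_sq {Q : E → ℝ} {p : E} (hQc : ContinuousAt Q p)
    (hQ : ∀ (r : ℝ) v, Q (r • v) = r ^ 2 * Q v) (hp : Q p < 0) :
    ∃ c θ : ℝ, 0 < c ∧ 0 < θ ∧
      ∀ w, (1 - θ) * (‖p‖ * ‖w‖) < ⟪p, w⟫ → Q w ≤ -(c * ‖w‖ ^ 2) := by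
  have hpn : 0 < ‖p‖ := norm_pos_iff.2 (ne_zero_of_homogeneous_neg hQ hp)
  obtain ⟨η, hη, hball⟩ := Metric.eventually_nhds_iff.1
    (hQc.eventually (gt_mem_nhds (by linarith : Q p < Q p / 2)))
  refine ⟨-(Q p / 2) / ‖p‖ ^ 2, η ^ 2 / (2 * ‖p‖ ^ 2), by apply div_pos <;> nlinarith,
    by positivity, fun w hw => ?_⟩
  have hw0 : 0 < ‖w‖ := norm_pos_iff.2 fun h => by simp [h] at hw
  set r := ‖p‖ / ‖w‖
  have hrw : r * ‖w‖ = ‖p‖ := div_mul_cancel₀ _ hw0.ne'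
  have hr : 0 < r := by positivity
  have hdist : ‖r • w - p‖ ^ 2 < η ^ 2 := by
    have hinner : (1 - η ^ 2 / (2 * ‖p‖ ^ 2)) * ‖p‖ ^ 2 < r * ⟪p, w⟫ := by
      calc _ = r * ((1 - η ^ 2 / (2 * ‖p‖ ^ 2)) * (‖p‖ * ‖w‖)) := by rw [pow_two ‖p‖, ← hrw]; ring
        _ < _ := mul_lt_mul_of_pos_left hw hr
    have hη' : (1 - η ^ 2 / (2 * ‖p‖ ^ 2)) * ‖p‖ ^ 2 = ‖p‖ ^ 2 - η ^ 2 / 2 := by field_simp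
    rw [norm_sub_sq_real, norm_smul, Real.norm_of_nonneg hr.le, hrw, real_inner_smul_left,
      real_inner_comm]
    linarith
  have hQrw : r ^ 2 * Q w < Q p / 2 := by
    rw [← hQ]
    exact hball (by rw [dist_eq_norm]; exact lt_of_pow_lt_pow_left₀ 2 hη.le hdist)
  have hpw : ‖p‖ ^ 2 = r ^ 2 * ‖w‖ ^ 2 := by rw [← hrw, mul_pow]
  refine (le_of_mul_le_mul_left (hQrw.le.trans_eq ?_) (pow_pos hr 2))
  rw [hpw]
  field_simp

lemma sq_div_le_mul_sq {M m s t : ℝ} (hM : 0 < M) (hm0 : 0 ≤ m) (hm : m ≤ M) (ht0 : 0 ≤ t)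
    (ht : t ≤ m * s) : t ^ 2 / M ≤ m * s ^ 2 := by
  rw [div_le_iff₀ hM]
  calc t ^ 2 ≤ (m * s) ^ 2 := by gcongr
    _ = m * s ^ 2 * m := by ring
    _ ≤ m * s ^ 2 * M := by gcongr

-- A `w` with `Φ |w| ⟪p, w⟫` bounded below either improves by a fixed factor when rotated onto the
-- ray of `p`, or lies in the cone about `p` on which `Q` is negative.
theorem exists_gain_or_kernel_mul_le_neg {Φ : ℝ → ℝ} {M s₀ : ℝ} {Q : E → ℝ} {p : E}
    (hΦ0 : ∀ s, 0 ≤ Φ s) (hΦM : ∀ s, 0 ≤ s → Φ s ≤ M) (hs₀ : 0 < s₀) (hΦs₀ : 0 < Φ s₀)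
    (hQc : ContinuousAt Q p) (hQ : ∀ (r : ℝ) v, Q (r • v) = r ^ 2 * Q v) (hp : Q p < 0) :
    ∃ a, 0 < a ∧ ∀ w, (∃ w', Φ ‖w‖ * ⟪p, w⟫ + a ≤ Φ ‖w'‖ * ⟪p, w'⟫) ∨ Φ ‖w‖ * Q w ≤ -a := by
  obtain ⟨c, θ, hc, hθ, hcone⟩ := exists_cone_le_neg_mul_norm_sq hQc hQ hp
  have hpn : 0 < ‖p‖ := norm_pos_iff.2 (ne_zero_of_homogeneous_neg hQ hp)
  have hM : 0 < M := hΦs₀.trans_le (hΦM s₀ hs₀.le)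
  have hray (s : ℝ) (hs : 0 ≤ s) : ∃ w', Φ ‖w'‖ * ⟪p, w'⟫ = Φ s * (‖p‖ * s) := by
    refine ⟨(s / ‖p‖) • p, ?_⟩
    rw [norm_smul, Real.norm_of_nonneg (by positivity), div_mul_cancel₀ _ hpn.ne',
      real_inner_smul_right, real_inner_self_eq_norm_sq]
    field_simp
  obtain ⟨b, hb, hb_ray⟩ : ∃ b, 0 < b ∧ Φ s₀ * (‖p‖ * s₀) = 2 * b :=
    ⟨Φ s₀ * (‖p‖ * s₀) / 2, by positivity, by ring⟩
  obtain ⟨a, ha, hab, haθ, hac⟩ :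
      ∃ a, 0 < a ∧ a ≤ b ∧ a ≤ θ * b ∧ a ≤ c * ((b / ‖p‖) ^ 2 / M) :=
    ⟨min b (min (θ * b) (c * ((b / ‖p‖) ^ 2 / M))), by positivity, by simp, by simp, by simp⟩
  refine ⟨a, ha, fun w => ?_⟩
  rcases le_or_gt (Φ ‖w‖ * ⟪p, w⟫) b with hsmall | hlarge
  · obtain ⟨w', hw'⟩ := hray s₀ hs₀.le
    exact .inl ⟨w', by linarith⟩
  have hlarge_ray : b < Φ ‖w‖ * (‖p‖ * ‖w‖) :=
    hlarge.trans_le (mul_le_mul_of_nonneg_left (real_inner_le_norm p w) (hΦ0 _))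
  rcases le_or_gt ⟪p, w⟫ ((1 - θ) * (‖p‖ * ‖w‖)) with hoff | hin
  · obtain ⟨w', hw'⟩ := hray ‖w‖ (norm_nonneg w)
    have hgain : θ * b ≤ θ * (Φ ‖w‖ * (‖p‖ * ‖w‖)) := by gcongr
    have hinner := mul_le_mul_of_nonneg_left hoff (hΦ0 ‖w‖)
    exact .inl ⟨w', by linarith⟩
  · have hmass : (b / ‖p‖) ^ 2 / M ≤ Φ ‖w‖ * ‖w‖ ^ 2 := by
      refine sq_div_le_mul_sq hM (hΦ0 _) (hΦM _ (norm_nonneg w)) (by positivity) ?_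
      rw [div_le_iff₀ hpn]
      linarith
    have hneg := mul_le_mul_of_nonneg_left (hcone w hin) (hΦ0 ‖w‖)
    have hcmass := mul_le_mul_of_nonneg_left hmass hc.le
    exact .inr (by linarith)

end Cone

section Consistency

/-- `nonlocalInfLap` on an arbitrary metric space, with a weight `G` in place of `f ^ α`. -/
noncomputable def weightedInfLap {X : Type*} [PseudoMetricSpace X] (G : X → ℝ) (Φ : ℝ → ℝ)
    (φ : X → ℝ) (h : ℝ) (x : X) : ℝ :=
  (⨆ y, G x * G y * Φ (dist x y / h) * (φ y - φ x)) +
    ⨅ y, G x * G y * Φ (dist x y / h) * (φ y - φ x)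

lemma nonlocalInfLap_eq_weightedInfLap {d : ℕ} (f : EuclideanSpace ℝ (Fin d) → ℝ) (α : ℝ)
    (Φ : ℝ → ℝ) (φ : EuclideanSpace ℝ (Fin d) → ℝ) :
    nonlocalInfLap f α Φ φ = weightedInfLap (fun y => f y ^ α) Φ φ := rfl

lemma weightedInfLap_eq_rescaled {E : Type*} [NormedAddCommGroup E] [NormedSpace ℝ E]
    (G : E → ℝ) (Φ : ℝ → ℝ) (φ : E → ℝ) {h : ℝ} (hh : 0 < h) (x : E) :
    weightedInfLap G Φ φ h x = (⨆ w : E, Φ ‖w‖ * weightedIncrement G φ (x, h • w)) +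
      ⨅ w : E, Φ ‖w‖ * weightedIncrement G φ (x, h • w) := by
  have hsurj : Function.Surjective fun w : E => x + h • w := fun y =>
    ⟨h⁻¹ • (y - x), by simp [smul_inv_smul₀ hh.ne']⟩
  have hterm (w : E) : G x * G (x + h • w) * Φ (dist x (x + h • w) / h) * (φ (x + h • w) - φ x)
      = Φ ‖w‖ * weightedIncrement G φ (x, h • w) := by
    rw [dist_self_add_right, norm_smul, Real.norm_of_nonneg hh.le, mul_div_cancel_left₀ _ hh.ne',
      weightedIncrement]
    ring
  rw [weightedInfLap, ← hsurj.iSup_comp, ← hsurj.iInf_comp]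
  simp only [hterm]

lemma fderiv_rpow_const_apply {E : Type*} [NormedAddCommGroup E] [NormedSpace ℝ E] {f : E → ℝ}
    {x : E} {α : ℝ} (hf : DifferentiableAt ℝ f x) (hfx : 0 < f x) (v : E) :
    fderiv ℝ (fun y => f y ^ α) x v = f x ^ α * (α * (fderiv ℝ f x v / f x)) := by
  rw [(hf.hasFDerivAt.rpow_const (.inl hfx.ne')).fderiv, Real.rpow_sub_one hfx.ne', smul_apply,
    smul_eq_mul]
  ring

variable {E : Type*} [NormedAddCommGroup E] [InnerProductSpace ℝ E] [CompleteSpace E]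

theorem limsup_weightedInfLap_div_sq_neg {ι : Type*} {l : Filter ι} [l.NeBot] {G φ : E → ℝ}
    {Φ : ℝ → ℝ} {R s₀ : ℝ} {x₀ : E} {x : ι → E} {h : ι → ℝ} (hG : ContDiffAt ℝ 1 G x₀)
    (hG0 : G x₀ ≠ 0) (hφ : ContDiffAt ℝ 2 φ x₀) (hΦ0 : ∀ s, 0 ≤ Φ s)
    (hΦb : BddAbove (Φ '' Set.Icc 0 R)) (hΦR : ∀ s, R ≤ s → Φ s = 0) (hs₀ : 0 < s₀)
    (hΦs₀ : 0 < Φ s₀) (hneg : incrementHessian G φ x₀ (gradient φ x₀) < 0)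
    (hx : Tendsto x l (𝓝 x₀)) (hh : Tendsto h l (𝓝[>] 0)) :
    limsup (fun i => weightedInfLap G Φ φ (h i) (x i) / h i ^ 2) l < 0 := by
  set p := G x₀ ^ 2 • gradient φ x₀
  have hp : incrementHessian G φ x₀ p < 0 := by
    rw [incrementHessian_smul]
    exact mul_neg_of_pos_of_neg (by positivity) hneg
  have hfirst : (fun q => weightedIncrement G φ q - ⟪p, q.2⟫) =o[𝓝 (x₀, 0)]
      fun q => ‖q.2‖ ^ 1 := by
    simpa [p, real_inner_smul_left] using
      isLittleO_weightedIncrement hG.continuousAt (hφ.hasStrictFDerivAt two_ne_zero)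
  have hA := tendstoUniformly_kernel_mul_rescaled hΦ0 hΦb hΦR
    (fun r w => by rw [pow_one, real_inner_smul_right]) hfirst hx hh
  have hB := tendstoUniformly_kernel_mul_rescaled hΦ0 hΦb hΦR
    (incrementHessian_smul G φ x₀) (isLittleO_weightedIncrement_add_neg hG hφ) hx hh
  obtain ⟨C₁, hC₁⟩ := exists_abs_kernel_mul_le (k := 1) hΦ0 hΦb hΦR
    (P := fun w => ⟪p, w⟫) (by simpa using ((innerSL ℝ p).isBigO_id ⊤).norm_right)
  obtain ⟨C₂, hC₂⟩ := exists_abs_kernel_mul_le hΦ0 hΦb hΦR (isBigO_incrementHessian G φ x₀ ⊤)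
  obtain ⟨M, -, hM⟩ := exists_kernel_mul_pow_le hΦ0 hΦb hΦR 0
  obtain ⟨a, ha, hgain⟩ := exists_gain_or_kernel_mul_le_neg hΦ0 (by simpa using hM) hs₀ hΦs₀
    (continuous_incrementHessian G φ x₀).continuousAt (incrementHessian_smul G φ x₀) hp
  have hlim := limsup_ciSup_add_ciInf_div_sq_neg
    (T := fun i w => Φ ‖w‖ * weightedIncrement G φ (x i, h i • w)) (fun w => -w) hh
    (by simpa using hA) (by simpa [mul_add] using hB) (fun w => (hC₁ w).trans (le_max_left C₁ C₂))
    (fun w => (hC₂ w).trans (le_max_right C₁ C₂)) ha hgain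
  refine (limsup_congr ?_).trans_lt hlim
  filter_upwards [hh.eventually self_mem_nhdsWithin] with i hi
  rw [weightedInfLap_eq_rescaled G Φ φ hi]

lemma inner_fderiv_gradient {φ : E → ℝ} {x : E} (v w : E) :
    ⟪w, fderiv ℝ (gradient φ) x v⟫ = fderiv ℝ (fderiv ℝ φ) x v w := by
  -- Over `ℝ` the conjugate-linear Riesz map is linear by unfolding.
  let L : E ≃ₗᵢ[ℝ] StrongDual ℝ E := InnerProductSpace.toDual ℝ E
  have hL : L ∘ gradient φ = fderiv ℝ φ := toDual_comp_gradient
  rw [← hL, L.comp_fderiv, real_inner_comm]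
  rfl

lemma incrementHessian_rpow_const_gradient {f φ : E → ℝ} {x₀ : E} {α : ℝ}
    (hf : DifferentiableAt ℝ f x₀) (hfx₀ : 0 < f x₀) (hgrad : gradient φ x₀ ≠ 0) :
    incrementHessian (fun y => f y ^ α) φ x₀ (gradient φ x₀) =
      (f x₀ ^ α * ‖gradient φ x₀‖) ^ 2 *
        (⟪gradient φ x₀, fderiv ℝ (gradient φ) x₀ (gradient φ x₀)⟫ / ‖gradient φ x₀‖ ^ 2 +
          2 * α * (⟪gradient f x₀, gradient φ x₀⟫ / f x₀)) := by
  have hnorm : ‖gradient φ x₀‖ ≠ 0 := norm_ne_zero_iff.2 hgrad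
  rw [incrementHessian, fderiv_rpow_const_apply hf hfx₀, inner_fderiv_gradient,
    inner_gradient_left, ← inner_gradient_left (f := φ), real_inner_self_eq_norm_sq]
  field_simp

theorem nonlocal_infLap_consistency_general {ι : Type*} {l : Filter ι} [l.NeBot] {φ f : E → ℝ}
    {Φ : ℝ → ℝ} {R s₀ : ℝ} {x₀ : E} {x : ι → E} {h : ι → ℝ} (hφ : ContDiffAt ℝ 2 φ x₀)
    (hf : ContDiffAt ℝ 1 f x₀) (hfx₀ : 0 < f x₀) (α : ℝ) (hΦ0 : ∀ s, 0 ≤ Φ s)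
    (hΦb : BddAbove (Φ '' Set.Icc 0 R)) (hΦR : ∀ s, R ≤ s → Φ s = 0) (hs₀ : 0 < s₀)
    (hΦs₀ : 0 < Φ s₀) (hgrad : gradient φ x₀ ≠ 0)
    (hpde : ⟪gradient φ x₀, fderiv ℝ (gradient φ) x₀ (gradient φ x₀)⟫ / ‖gradient φ x₀‖ ^ 2 +
      2 * α * (⟪gradient f x₀, gradient φ x₀⟫ / f x₀) < 0)
    (hx : Tendsto x l (𝓝 x₀)) (hh : Tendsto h l (𝓝[>] 0)) :
    limsup (fun i => weightedInfLap (fun y => f y ^ α) Φ φ (h i) (x i) / h i ^ 2) l < 0 := by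
  have hneg : incrementHessian (fun y => f y ^ α) φ x₀ (gradient φ x₀) < 0 := by
    rw [incrementHessian_rpow_const_gradient (hf.differentiableAt one_ne_zero) hfx₀ hgrad]
    exact mul_neg_of_pos_of_neg (by positivity) hpde
  exact limsup_weightedInfLap_div_sq_neg (hf.rpow_const_of_ne hfx₀.ne')
    (Real.rpow_pos_of_pos hfx₀ α).ne' hφ hΦ0 hΦb hΦR hs₀ hΦs₀ hneg hx hh

end Consistency

/-- Consistency of the nonlocal ∞-Laplacian at points of nonvanishing gradient: if
`∇φ(x₀) ≠ 0` and `Δ_∞φ(x₀) + 2α ∇log f(x₀)·∇φ(x₀) < 0`, then for any sequence `x_n → x₀`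
with scales `h_n → 0⁺`, `limsup h_n^{−2} H_{h_n} φ(x_n) < 0`. -/
theorem nonlocal_infLap_consistency {d : ℕ}
    (φ : EuclideanSpace ℝ (Fin d) → ℝ) (hφ : ContDiff ℝ 3 φ)
    (f : EuclideanSpace ℝ (Fin d) → ℝ) (hf : ContDiff ℝ 2 f) (hfpos : ∀ x, 0 < f x)
    (α : ℝ)
    (Φ : ℝ → ℝ) (hΦ : ContDiff ℝ 2 Φ) (hΦ1 : ∀ s ∈ Set.Ioo (0 : ℝ) 1, 1 ≤ Φ s)
    (hΦ0 : ∀ s, 0 ≤ Φ s) (hΦsupp : ∀ s, 2 ≤ s → Φ s = 0)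
    (x₀ : EuclideanSpace ℝ (Fin d)) (hgrad : gradient φ x₀ ≠ 0)
    (hpde : ⟪gradient φ x₀, (fderiv ℝ (gradient φ) x₀) (gradient φ x₀)⟫ /
        ‖gradient φ x₀‖ ^ 2 +
        2 * α * (⟪gradient f x₀, gradient φ x₀⟫ / f x₀) < 0)
    (x_ : ℕ → EuclideanSpace ℝ (Fin d)) (hx : Tendsto x_ atTop (nhds x₀))
    (h_ : ℕ → ℝ) (hh : ∀ n, 0 < h_ n) (hh0 : Tendsto h_ atTop (nhds 0)) :
    limsup (fun n : ℕ => nonlocalInfLap f α Φ φ (h_ n) (x_ n) / (h_ n) ^ 2) atTop < 0 := by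
  rw [nonlocalInfLap_eq_weightedInfLap]
  exact nonlocal_infLap_consistency_general (hφ.contDiffAt.of_le (by norm_num))
    (hf.contDiffAt.of_le one_le_two) (hfpos x₀) α hΦ0
    (isCompact_Icc.bddAbove_image hΦ.continuous.continuousOn) hΦsupp one_half_pos
    (one_pos.trans_le (hΦ1 _ ⟨one_half_pos, one_half_lt_one⟩)) hgrad hpde hx
    (tendsto_nhdsWithin_iff.2 ⟨hh0, .of_forall hh⟩)
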